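/- For n = s + r with s ≥ r ≥ 1 and Δ < r, the number of permutations π ∈ S_n with longest increasing subsequence of length 2, longest decreasing subsequence of length s, and exactly C(s,2) + C(r,2) + Δ inversions, equals p_2(Δ) if s = r, and equals 2·p_2(Δ) if s > r. -/

import Mathlib

/-- The number of inversions of a permutation of `Fin n`:
pairs of positions `i < j` with `π i > π j`. -/
def invCount {n : ℕ} (π : Equiv.Perm (Fin n)) : ℕ :=
  (Finset.univ.filter fun p : Fin n × Fin n => p.1 < p.2 ∧ π p.2 < π p.1).card

/-- The length of the longest (strictly) increasing subsequence of `π`. -/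
noncomputable def lisLen {n : ℕ} (π : Equiv.Perm (Fin n)) : ℕ :=
  sSup {k | ∃ t : Finset (Fin n), t.card = k ∧ StrictMonoOn ⇑π ↑t}

/-- The length of the longest (strictly) decreasing subsequence of `π`. -/
noncomputable def ldsLen {n : ℕ} (π : Equiv.Perm (Fin n)) : ℕ :=
  sSup {k | ∃ t : Finset (Fin n), t.card = k ∧ StrictAntiOn ⇑π ↑t}

/-- `p₂(Δ)`: the number of pairs `(μ, ν)` of partitions with `|μ| + |ν| = Δ`. -/
noncomputable def twoColored (Δ : ℕ) : ℕ :=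
  Nat.card {pq : (Σ k : Fin (Δ + 1), Nat.Partition k) ×
      (Σ k : Fin (Δ + 1), Nat.Partition k) // ((pq.1.1 : ℕ) + (pq.2.1 : ℕ) = Δ)}

/-- Noninversions. -/
def nonInv {n : ℕ} (π : Equiv.Perm (Fin n)) : ℕ :=
  (Finset.univ.filter fun p : Fin n × Fin n => p.1 < p.2 ∧ π p.1 < π p.2).card

/-- Number of pairs (element of `P`, smaller nonelement of `P`). -/
def nrm {n : ℕ} (P : Finset (Fin n)) : ℕ :=
  (Finset.univ.filter fun p : Fin n × Fin n => p.1 ∈ P ∧ p.2 ∉ P ∧ p.2 < p.1).card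

/-- Starting points of noninversions. -/
def starts {n : ℕ} (π : Equiv.Perm (Fin n)) : Finset (Fin n) :=
  Finset.univ.filter fun i => ∃ j, i < j ∧ π i < π j

theorem sSup_nat_iff (S : Set ℕ) (N : ℕ) (hN : ∀ k ∈ S, k ≤ N) (h0 : 0 ∈ S) (m : ℕ) :
    sSup S = m ↔ m ∈ S ∧ ∀ k ∈ S, k ≤ m := by
  have hb : BddAbove S := ⟨N, hN⟩
  constructor
  · rintro rfl
    exact ⟨Nat.sSup_mem ⟨0, h0⟩ hb, fun k hk => le_csSup hb hk⟩
  · rintro ⟨h1, h2⟩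
    exact le_antisymm (csSup_le ⟨0, h0⟩ h2) (le_csSup hb h1)

theorem lis_iff {n : ℕ} (π : Equiv.Perm (Fin n)) (m : ℕ) :
    lisLen π = m ↔ (∃ t : Finset (Fin n), t.card = m ∧ StrictMonoOn ⇑π ↑t) ∧
      ∀ t : Finset (Fin n), StrictMonoOn ⇑π ↑t → t.card ≤ m := by
  unfold lisLen
  rw [sSup_nat_iff _ n]
  · simp only [Set.mem_ofPred_eq]
    refine and_congr Iff.rfl ⟨fun h t ht => h _ ⟨t, rfl, ht⟩, ?_⟩
    rintro h k ⟨t, rfl, ht⟩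
    exact h t ht
  · rintro k ⟨t, rfl, ht⟩
    simpa using t.card_le_univ
  · exact ⟨∅, by simp, by intro x hx; simp at hx⟩

theorem lds_iff {n : ℕ} (π : Equiv.Perm (Fin n)) (m : ℕ) :
    ldsLen π = m ↔ (∃ t : Finset (Fin n), t.card = m ∧ StrictAntiOn ⇑π ↑t) ∧
      ∀ t : Finset (Fin n), StrictAntiOn ⇑π ↑t → t.card ≤ m := by
  unfold ldsLen
  rw [sSup_nat_iff _ n]
  · simp only [Set.mem_ofPred_eq]
    refine and_congr Iff.rfl ⟨fun h t ht => h _ ⟨t, rfl, ht⟩, ?_⟩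
    rintro h k ⟨t, rfl, ht⟩
    exact h t ht
  · rintro k ⟨t, rfl, ht⟩
    simpa using t.card_le_univ
  · exact ⟨∅, by simp, by intro x hx; simp at hx⟩

theorem card_lt_pairs (n : ℕ) :
    (Finset.univ.filter fun p : Fin n × Fin n => p.1 < p.2).card = n.choose 2 := by
  have h := Finset.card_filter (fun p : Fin n × Fin n => p.1 < p.2) Finset.univ
  rw [h, Fintype.sum_prod_type_right]
  simp only [← Finset.card_filter]
  have : ∀ y : Fin n, (Finset.univ.filter fun x : Fin n => x < y).card = y := by
    intro y
    rw [Finset.filter_gt_eq_Iio, Fin.card_Iio]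
  simp only [this]
  rw [Fin.sum_univ_eq_sum_range (fun i => i) n, Finset.sum_range_id, Nat.choose_two_right]

theorem inv_add_nonInv {n : ℕ} (π : Equiv.Perm (Fin n)) :
    invCount π + nonInv π = n.choose 2 := by
  rw [← card_lt_pairs, ← Finset.card_filter_add_card_filter_not (fun p : Fin n × Fin n => π p.2 < π p.1), Finset.filter_filter, Finset.filter_filter]
  unfold invCount nonInv
  congr 2
  ext p
  simp only [Finset.mem_filter, Finset.mem_univ, true_and, not_lt]
  refine and_congr_right fun h => ⟨le_of_lt, fun h' => lt_of_le_of_ne h' fun h'' => ?_⟩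
  exact h.ne (π.injective h'')

theorem inv_iff {s r Δ : ℕ} (π : Equiv.Perm (Fin (s + r))) :
    invCount π = s.choose 2 + r.choose 2 + Δ ↔ nonInv π + Δ = s * r := by
  have h := inv_add_nonInv π
  have h2 : (s + r).choose 2 = s.choose 2 + r.choose 2 + s * r := by
    clear h π
    induction r with
    | zero => simp
    | succ r ih =>
      rw [← Nat.add_assoc, Nat.choose_succ_succ' (s + r) 1, ih, Nat.choose_succ_succ' r 1]
      simp only [Nat.choose_one_right]
      ring
  omega

theorem nrm_image {n : ℕ} (π : Equiv.Perm (Fin n)) (P : Finset (Fin n)) :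
    nrm (P.map π.toEmbedding) =
    (Finset.univ.filter fun p : Fin n × Fin n => p.1 ∈ P ∧ p.2 ∉ P ∧ π p.2 < π p.1).card := by
  unfold nrm
  symm
  apply Finset.card_bij (fun p _ => (π p.1, π p.2))
  · intro p; simp
  · rintro ⟨a, b⟩ _ ⟨c, d⟩ _; simp
  · rintro ⟨a, b⟩ h
    refine ⟨(π.symm a, π.symm b), ?_, by simp⟩
    simp only [Finset.mem_filter, Finset.mem_univ, true_and, Finset.mem_map_equiv] at h
    simpa using h

/-- The key count. -/
theorem key_count {n : ℕ} (π : Equiv.Perm (Fin n)) (P : Finset (Fin n))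
    (h1 : StrictAntiOn π P) (h2 : ∀ i j, i ∉ P → j ∉ P → i < j → π j < π i)
    (h3 : ∀ i j, i ∈ P → j ∉ P → j < i → ¬ π j < π i) :
    nonInv π + (nrm P + nrm (P.map π.toEmbedding)) = P.card * Pᶜ.card := by
  rw [nrm_image, ← Finset.card_product]
  unfold nonInv nrm
  rw [← Finset.card_union_of_disjoint, ← Finset.card_union_of_disjoint]
  · congr 1
    ext ⟨i, j⟩
    simp only [Finset.mem_union, Finset.mem_filter, Finset.mem_univ, true_and, Finset.mem_product,
      Finset.mem_compl]
    constructor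
    · rintro (⟨h, h'⟩ | h | h)
      · by_cases hi : i ∈ P
        · refine ⟨hi, fun hj => ?_⟩
          exact lt_asymm h' (h1 hi hj h)
        · by_cases hj : j ∈ P
          · exact absurd h' (h3 j i hj hi h)
          · exact absurd h' (lt_asymm (h2 i j hi hj h))
      · exact ⟨h.1, h.2.1⟩
      · exact ⟨h.1, h.2.1⟩
    · rintro ⟨hi, hj⟩
      have hne : i ≠ j := fun h => hj (h ▸ hi)
      have hne' : π i ≠ π j := fun h => hne (π.injective h)
      rcases lt_or_gt_of_ne hne with h | h
      · rcases lt_or_gt_of_ne hne' with h' | h'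
        · exact Or.inl ⟨h, h'⟩
        · exact Or.inr (Or.inr ⟨hi, hj, h'⟩)
      · exact Or.inr (Or.inl ⟨hi, hj, h⟩)
  · rw [Finset.disjoint_left]
    rintro ⟨i, j⟩
    simp only [Finset.mem_union, Finset.mem_filter, Finset.mem_univ, true_and]
    rintro ⟨h, h'⟩ (h'' | h'')
    · exact lt_asymm h h''.2.2
    · exact lt_asymm h' h''.2.2
  · rw [Finset.disjoint_left]
    rintro ⟨i, j⟩
    simp only [Finset.mem_filter, Finset.mem_univ, true_and]
    rintro ⟨h, h', h''⟩ h4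
    exact h3 i j h h' h'' h4.2.2

theorem no_three {n : ℕ} (π : Equiv.Perm (Fin n))
    (h : ∀ t : Finset (Fin n), StrictMonoOn ⇑π ↑t → t.card ≤ 2) (i j k : Fin n)
    (hij : i < j) (hjk : j < k) (h1 : π i < π j) (h2 : π j < π k) : False := by
  have := h {i, j, k} (by
    intro x hx y hy hxy
    simp only [Finset.coe_insert, Finset.coe_singleton, Set.mem_insert_iff,
      Set.mem_singleton_iff] at hx hy
    have := h1.trans h2
    have := hij.trans hjk
    rcases hx with rfl | rfl | rfl <;> rcases hy with rfl | rfl | rfl <;>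
      first | assumption | (exfalso; exact lt_irrefl _ hxy) | (exfalso; exact lt_asymm hxy (by assumption)))
  rw [Finset.card_eq_three.2 ⟨i, j, k, hij.ne, (hij.trans hjk).ne, hjk.ne, rfl⟩] at this
  omega

theorem starts_props {n : ℕ} (π : Equiv.Perm (Fin n))
    (h : ∀ t : Finset (Fin n), StrictMonoOn ⇑π ↑t → t.card ≤ 2) :
    StrictAntiOn π (starts π) ∧ (∀ i j, i ∉ starts π → j ∉ starts π → i < j → π j < π i) ∧
    (∀ i j, i ∈ starts π → j ∉ starts π → j < i → ¬ π j < π i) := by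
  refine ⟨?_, ?_, ?_⟩
  · intro i hi j hj hij
    by_contra hc
    have hlt : π i < π j := lt_of_le_of_ne (not_lt.1 hc) fun h => hij.ne (π.injective h)
    simp only [starts, Finset.coe_filter, Finset.mem_univ, true_and, Set.mem_ofPred_eq] at hj
    obtain ⟨k, hk, hk'⟩ := hj
    exact no_three π h i j k hij hk hlt hk'
  · intro i j hi hj hij
    simp only [starts, Finset.mem_filter, Finset.mem_univ, true_and, not_exists, not_and] at hi
    exact lt_of_le_of_ne (not_lt.1 (hi j hij)) fun h => hij.ne' (π.injective h)
  · intro i j hi hj hij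
    simp only [starts, Finset.mem_filter, Finset.mem_univ, true_and, not_exists, not_and] at hj
    exact hj i hij

theorem card_starts {s r Δ : ℕ} (hΔ : Δ < r) (π : Equiv.Perm (Fin (s + r)))
    (h : ∀ t : Finset (Fin (s + r)), StrictMonoOn ⇑π ↑t → t.card ≤ 2)
    (hl : ldsLen π = s) (hN : nonInv π + Δ = s * r) :
    (starts π).card = s ∨ (starts π).card = r := by
  obtain ⟨p1, p2, p3⟩ := starts_props π h
  obtain ⟨⟨t, ht, hta⟩, hmax⟩ := (lds_iff π s).1 hl
  set A := starts π with hA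
  have a1 : A.card ≤ s := hmax A p1
  have a2 : Aᶜ.card ≤ s := hmax Aᶜ (by
    intro i hi j hj hij
    exact p2 i j (by simpa using hi) (by simpa using hj) hij)
  have hc : A.card + Aᶜ.card = s + r := by simp [Finset.card_add_card_compl]
  by_contra hcon
  have b1 : A.card ≤ s - 1 := by omega
  have b2 : Aᶜ.card ≤ s - 1 := by omega
  have hcov : nonInv π ≤ ((A \ t) ×ˢ Aᶜ ∪ A ×ˢ (Aᶜ \ t)).card := by
    apply Finset.card_le_card
    rintro ⟨i, j⟩ hp
    simp only [Finset.mem_filter, Finset.mem_univ, true_and] at hp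
    have hi : i ∈ A := by
      simp only [hA, starts, Finset.mem_filter, Finset.mem_univ, true_and]; exact ⟨j, hp⟩
    have hj : j ∉ A := fun hj => lt_asymm hp.2 (p1 hi hj hp.1)
    have : i ∉ t ∨ j ∉ t := by
      by_contra hh
      push Not at hh
      exact lt_asymm hp.2 (hta hh.1 hh.2 hp.1)
    simp only [Finset.mem_union, Finset.mem_product, Finset.mem_sdiff, Finset.mem_compl]
    tauto
  have c1 : ((A \ t) ×ˢ Aᶜ).card ≤ (A \ t).card * (s - 1) := by
    rw [Finset.card_product]; exact Nat.mul_le_mul_left _ b2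
  have c2 : (A ×ˢ (Aᶜ \ t)).card ≤ (Aᶜ \ t).card * (s - 1) := by
    rw [Finset.card_product, mul_comm]; exact Nat.mul_le_mul_left _ b1
  have c3 : (A \ t).card + (Aᶜ \ t).card = r := by
    have e : tᶜ.card = r := by rw [Finset.card_compl, ht]; simp
    refine Eq.trans ?_ e
    rw [← Finset.card_union_of_disjoint]
    · congr 1; ext x; simp; tauto
    · rw [Finset.disjoint_left]; intro x; simp; tauto
  have c4 := Finset.card_union_le ((A \ t) ×ˢ Aᶜ) (A ×ˢ (Aᶜ \ t))
  have c5 : nonInv π ≤ r * (s - 1) := by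
    have c6 : (A \ t).card * (s - 1) + (Aᶜ \ t).card * (s - 1) = r * (s - 1) := by
      rw [← add_mul, c3]
    omega
  have : 1 ≤ s := by omega
  obtain ⟨s', rfl⟩ := Nat.exists_eq_add_of_le this
  have : 1 + s' - 1 = s' := by omega
  rw [this] at c5
  nlinarith

theorem forward {s r Δ : ℕ} (hΔ : Δ < r) (π : Equiv.Perm (Fin (s + r)))
    (hlis : lisLen π = 2)
    (hl : ldsLen π = s) (hN : nonInv π + Δ = s * r) :
    ((starts π).card = s ∨ (starts π).card = r) ∧
    nrm (starts π) + nrm ((starts π).map π.toEmbedding) = Δ := by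
  have h := ((lis_iff π 2).1 hlis).2
  obtain ⟨p1, p2, p3⟩ := starts_props π h
  have hcs := card_starts hΔ π h hl hN
  refine ⟨hcs, ?_⟩
  have hk := key_count π (starts π) p1 p2 p3
  have hc : (starts π).card + (starts π)ᶜ.card = s + r := by simp [Finset.card_add_card_compl]
  have : (starts π).card * (starts π)ᶜ.card = s * r := by
    rcases hcs with h | h
    · rw [h, show (starts π)ᶜ.card = r by omega]
    · rw [h, show (starts π)ᶜ.card = s by omega, mul_comm]
  omega

theorem anti_le_one {n : ℕ} (π : Equiv.Perm (Fin n)) (t : Finset (Fin n))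
    (ht : StrictMonoOn π t) (hp : ∀ i ∈ t, ∀ j ∈ t, i < j → π j < π i) : t.card ≤ 1 := by
  rw [Finset.card_le_one]
  intro a ha b hb
  rcases lt_trichotomy a b with h | h | h
  · exact absurd (ht ha hb h) (lt_asymm (hp a ha b hb h))
  · exact h
  · exact absurd (ht hb ha h) (lt_asymm (hp b hb a ha h))

theorem backward {s r Δ : ℕ} (hrs : r ≤ s) (hΔ : Δ < r) (π : Equiv.Perm (Fin (s + r)))
    (P : Finset (Fin (s + r))) (hP : P.card = s ∨ P.card = r)
    (h1 : StrictAntiOn π P) (h2 : ∀ i j, i ∉ P → j ∉ P → i < j → π j < π i)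
    (hn : nrm P + nrm (P.map π.toEmbedding) = Δ) :
    lisLen π = 2 ∧ ldsLen π = s ∧ nonInv π + Δ = s * r ∧ starts π = P := by
  have hc : P.card + Pᶜ.card = s + r := by simp [Finset.card_add_card_compl]
  -- any set of pairs in P × Pᶜ, each of which is not an ascent, is small
  have small : ∀ T : Finset (Fin (s + r) × Fin (s + r)),
      (∀ p ∈ T, p.1 ∈ P ∧ p.2 ∉ P ∧ (p.2 < p.1 ∨ π p.2 < π p.1)) → T.card ≤ Δ := by
    intro T hT
    rw [← hn, nrm_image]
    unfold nrm
    refine le_trans (Finset.card_le_card ?_) (Finset.card_union_le _ _)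
    intro p hp
    have := hT p hp
    simp only [Finset.mem_union, Finset.mem_filter, Finset.mem_univ, true_and]
    tauto
  have row : ∀ i ∈ P, ∃ j, j ∉ P ∧ i < j ∧ π i < π j := by
    intro i hi
    by_contra hcon
    push Not at hcon
    have := small ({i} ×ˢ Pᶜ) (by
      rintro ⟨a, b⟩ hp
      simp only [Finset.mem_product, Finset.mem_singleton, Finset.mem_compl] at hp
      obtain ⟨rfl, hb⟩ := hp
      refine ⟨hi, hb, ?_⟩
      have hne : a ≠ b := fun h => hb (h ▸ hi)
      have hne' : π a ≠ π b := fun h => hne (π.injective h)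
      rcases lt_or_gt_of_ne hne with h | h
      · exact Or.inr (lt_of_le_of_ne (hcon b hb h) hne'.symm)
      · exact Or.inl h)
    rw [Finset.card_product, Finset.card_singleton] at this
    omega
  have h3 : ∀ i j, i ∈ P → j ∉ P → j < i → ¬ π j < π i := by
    intro i j hi hj hji hlt
    obtain ⟨k, hk, hik, hπ⟩ := row i hi
    exact lt_asymm (h2 j k hj hk (hji.trans hik)) (hlt.trans hπ)
  have hk := key_count π P h1 h2 h3
  have hprod : P.card * Pᶜ.card = s * r := by
    rcases hP with h | h
    · rw [h, show Pᶜ.card = r by omega]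
    · rw [h, show Pᶜ.card = s by omega, mul_comm]
  refine ⟨?_, ?_, by omega, ?_⟩
  · rw [lis_iff]
    constructor
    · have hne : P.Nonempty := by rw [← Finset.card_pos]; omega
      obtain ⟨i, hi⟩ := hne
      obtain ⟨j, hj, hij, hπ⟩ := row i hi
      refine ⟨{i, j}, Finset.card_pair hij.ne, ?_⟩
      intro x hx y hy hxy
      simp only [Finset.coe_insert, Finset.coe_singleton, Set.mem_insert_iff,
        Set.mem_singleton_iff] at hx hy
      rcases hx with rfl | rfl <;> rcases hy with rfl | rfl
      · exact absurd hxy (lt_irrefl _)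
      · exact hπ
      · exact absurd hxy (lt_asymm hij)
      · exact absurd hxy (lt_irrefl _)
    · intro t ht
      have e1 : (t.filter (· ∈ P)).card ≤ 1 := anti_le_one π _
        (ht.mono (by intro x hx; simp at hx; exact hx.1)) (by
          intro i hi j hj hij
          simp only [Finset.mem_filter] at hi hj
          exact h1 hi.2 hj.2 hij)
      have e2 : (t.filter (· ∉ P)).card ≤ 1 := anti_le_one π _
        (ht.mono (by intro x hx; simp at hx; exact hx.1)) (by
          intro i hi j hj hij
          simp only [Finset.mem_filter] at hi hj
          exact h2 i j hi.2 hj.2 hij)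
      have e3 := Finset.card_filter_add_card_filter_not (s := t) (· ∈ P)
      omega
  · rw [lds_iff]
    constructor
    · rcases hP with h | h
      · exact ⟨P, h, h1⟩
      · refine ⟨Pᶜ, by omega, ?_⟩
        intro i hi j hj hij
        exact h2 i j (by simpa using hi) (by simpa using hj) hij
    · intro t ht
      have e3 := Finset.card_filter_add_card_filter_not (s := t) (· ∈ P)
      have e4 := small ((t.filter (· ∈ P)) ×ˢ (t.filter (· ∉ P))) (by
        rintro ⟨i, j⟩ hp
        simp only [Finset.mem_product, Finset.mem_filter] at hp
        obtain ⟨⟨hit, hi⟩, hjt, hj⟩ := hp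
        refine ⟨hi, hj, ?_⟩
        have hne : i ≠ j := fun h => hj (h ▸ hi)
        rcases lt_or_gt_of_ne hne with h | h
        · exact Or.inr (ht hit hjt h)
        · exact Or.inl h)
      rw [Finset.card_product] at e4
      have e5 : (t.filter (· ∈ P)).card ≤ P.card :=
        Finset.card_le_card (by intro x hx; simp at hx; exact hx.2)
      have e6 : (t.filter (· ∉ P)).card ≤ Pᶜ.card :=
        Finset.card_le_card (by intro x hx; simp at hx; simpa using hx.2)
      generalize (t.filter (· ∈ P)).card = x at *
      generalize (t.filter (· ∉ P)).card = y at *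
      rcases Nat.eq_zero_or_pos x with rfl | hx
      · omega
      · rcases Nat.eq_zero_or_pos y with rfl | hy
        · omega
        · by_contra hcon
          nlinarith
  · ext i
    simp only [starts, Finset.mem_filter, Finset.mem_univ, true_and]
    constructor
    · rintro ⟨j, hij, hπ⟩
      by_contra hi
      by_cases hj : j ∈ P
      · exact h3 j i hj hi hij hπ
      · exact lt_asymm hπ (h2 i j hi hj hij)
    · intro hi
      obtain ⟨j, _, h⟩ := row i hi
      exact ⟨j, h⟩

theorem exists_perm {n : ℕ} (P V : Finset (Fin n)) (h : V.card = P.card) :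
    ∃ π : Equiv.Perm (Fin n), StrictAntiOn π P ∧
      (∀ i j, i ∉ P → j ∉ P → i < j → π j < π i) ∧ P.map π.toEmbedding = V := by
  have key : ∀ (P V : Finset (Fin n)), V.card = P.card → ∃ e : {x // x ∈ P} ≃ {x // x ∈ V},
      ∀ x y, x < y → e y < e x := by
    intro P V h
    refine ⟨(P.orderIsoOfFin rfl).symm.toEquiv.trans
      (Fin.revPerm.trans (V.orderIsoOfFin h).toEquiv), ?_⟩
    intro x y hxy
    simpa using hxy
  obtain ⟨e, he⟩ := key P V h
  obtain ⟨f, hf⟩ := key Pᶜ Vᶜ (by rw [Finset.card_compl, Finset.card_compl, h])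
  let f' : {x // ¬ x ∈ P} ≃ {x // ¬ x ∈ V} :=
    (Equiv.subtypeEquivRight (by simp)).trans (f.trans (Equiv.subtypeEquivRight (by simp)))
  have hv1 : ∀ x (hx : x ∈ P), Equiv.subtypeCongr e f' x = e ⟨x, hx⟩ := by
    intro x hx
    simp [Equiv.subtypeCongr, hx]
  have hv2 : ∀ x (hx : x ∉ P), Equiv.subtypeCongr e f' x = f ⟨x, by simpa using hx⟩ := by
    intro x hx
    simp [Equiv.subtypeCongr, hx, f']
    rfl
  refine ⟨Equiv.subtypeCongr e f', ?_, ?_, ?_⟩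
  · intro i hi j hj hij
    rw [hv1 i hi, hv1 j hj]
    exact he ⟨i, hi⟩ ⟨j, hj⟩ hij
  · intro i j hi hj hij
    rw [hv2 i hi, hv2 j hj]
    exact hf ⟨i, by simpa using hi⟩ ⟨j, by simpa using hj⟩ hij
  · apply Finset.eq_of_subset_of_card_le
    · intro x hx
      obtain ⟨y, hy, rfl⟩ := Finset.mem_map.1 hx
      change Equiv.subtypeCongr e f' y ∈ V
      rw [hv1 y hy]
      exact (e ⟨y, hy⟩).2
    · rw [Finset.card_map, h]

theorem anti_unique {n : ℕ} (P : Finset (Fin n)) (π ρ : Equiv.Perm (Fin n))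
    (h1 : StrictAntiOn π P) (h2 : StrictAntiOn ρ P)
    (h : P.map π.toEmbedding = P.map ρ.toEmbedding) : ∀ i ∈ P, π i = ρ i := by
  have aux : ∀ (σ : Equiv.Perm (Fin n)), StrictAntiOn σ P →
      ∀ V (hV : V = P.map σ.toEmbedding) (hc : V.card = P.card),
      (fun x : Fin P.card => σ (P.orderEmbOfFin rfl (Fin.rev x))) = V.orderEmbOfFin hc := by
    intro σ hσ V hV hc
    apply Finset.orderEmbOfFin_unique
    · intro x
      rw [hV]
      exact Finset.mem_map.2 ⟨_, Finset.orderEmbOfFin_mem P rfl _, rfl⟩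
    · intro x y hxy
      apply hσ (Finset.orderEmbOfFin_mem P rfl _) (Finset.orderEmbOfFin_mem P rfl _)
      simpa using hxy
  have hc : (P.map π.toEmbedding).card = P.card := Finset.card_map _
  have e := (aux π h1 _ rfl hc).trans (aux ρ h2 _ h hc).symm
  intro i hi
  have : i ∈ Set.range (P.orderEmbOfFin rfl) := by
    rw [Finset.range_orderEmbOfFin]; exact hi
  obtain ⟨k, rfl⟩ := this
  have := congrFun e (Fin.rev k)
  simpa using this

theorem perm_unique {n : ℕ} (P : Finset (Fin n)) (π ρ : Equiv.Perm (Fin n))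
    (h1 : StrictAntiOn π P) (h1' : ∀ i j, i ∉ P → j ∉ P → i < j → π j < π i)
    (h2 : StrictAntiOn ρ P) (h2' : ∀ i j, i ∉ P → j ∉ P → i < j → ρ j < ρ i)
    (h : P.map π.toEmbedding = P.map ρ.toEmbedding) : π = ρ := by
  ext i
  by_cases hi : i ∈ P
  · rw [anti_unique P π ρ h1 h2 h i hi]
  · rw [anti_unique Pᶜ π ρ
      (fun a ha b hb => h1' a b (by simpa using ha) (by simpa using hb))
      (fun a ha b hb => h2' a b (by simpa using ha) (by simpa using hb)) ?_ i (by simpa using hi)]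
    ext x
    have := Finset.ext_iff.1 h x
    simp only [Finset.mem_map_equiv, Finset.mem_compl] at this ⊢
    rw [this]

theorem main_bij {s r Δ : ℕ} (hrs : r ≤ s) (hΔ : Δ < r) :
    Nat.card {π : Equiv.Perm (Fin (s + r)) //
        lisLen π = 2 ∧ ldsLen π = s ∧
        invCount π = s.choose 2 + r.choose 2 + Δ} =
    Nat.card {x : Finset (Fin (s + r)) × Finset (Fin (s + r)) //
      (x.1.card = s ∨ x.1.card = r) ∧ x.2.card = x.1.card ∧ nrm x.1 + nrm x.2 = Δ} := by
  simp only [inv_iff]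
  refine Nat.card_congr (Equiv.ofBijective (fun π =>
    ⟨(starts π.1, (starts π.1).map π.1.toEmbedding), ?_, ?_, ?_⟩) ⟨?_, ?_⟩)
  · exact (forward hΔ π.1 π.2.1 π.2.2.1 π.2.2.2).1
  · exact Finset.card_map _
  · exact (forward hΔ π.1 π.2.1 π.2.2.1 π.2.2.2).2
  · rintro ⟨π, h⟩ ⟨ρ, h'⟩ he
    simp only [Subtype.mk.injEq, Prod.mk.injEq] at he ⊢
    obtain ⟨p1, p2, _⟩ := starts_props π ((lis_iff π 2).1 h.1).2
    obtain ⟨q1, q2, _⟩ := starts_props ρ ((lis_iff ρ 2).1 h'.1).2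
    rw [← he.1] at q1 q2
    refine perm_unique _ π ρ p1 p2 q1 q2 ?_
    rw [he.2, he.1]
  · rintro ⟨⟨P, V⟩, h1, h2, h3⟩
    obtain ⟨π, p1, p2, rfl⟩ := exists_perm P V h2
    obtain ⟨q1, q2, q3, q4⟩ := backward hrs hΔ π P h1 p1 p2 h3
    refine ⟨⟨π, q1, q2, q3⟩, ?_⟩
    simp only [q4]

theorem card_mono_partition (a k : ℕ) (hk : k ≤ a) :
    Nat.card {f : Fin a → ℕ // Monotone f ∧ ∑ i, f i = k} = Nat.card (Nat.Partition k) := by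
  refine Nat.card_congr (Equiv.ofBijective (fun f =>
    Nat.Partition.ofSums k (↑(List.ofFn f.1) : Multiset ℕ)
      (by rw [Multiset.sum_coe, List.sum_ofFn]; exact f.2.2)) ⟨?_, ?_⟩)
  · rintro ⟨f, hf, hfs⟩ ⟨g, hg, hgs⟩ h
    have h' := congrArg Nat.Partition.parts h
    simp only [Nat.Partition.ofSums_parts] at h'
    have hm : (↑(List.ofFn f) : Multiset ℕ) = ↑(List.ofFn g) := by
      ext x
      by_cases hx : x = 0
      · subst hx
        have z : ∀ m : Multiset ℕ, m.count 0 + (m.filter (· ≠ 0)).card = m.card := by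
          intro m
          have := Multiset.filter_add_not (fun x : ℕ => x = 0) m
          conv_rhs => rw [← this]
          rw [Multiset.card_add, Multiset.count_eq_card_filter_eq]
          simp [eq_comm]
        have z1 := z ↑(List.ofFn f)
        have z2 := z ↑(List.ofFn g)
        rw [h'] at z1
        simp only [Multiset.coe_card, List.length_ofFn] at z1 z2
        omega
      · rw [← Multiset.count_filter_of_pos (p := (· ≠ 0)) hx, h',
          Multiset.count_filter_of_pos (p := (· ≠ 0)) hx]
    have hp : (List.ofFn f).Perm (List.ofFn g) := Multiset.coe_eq_coe.1 hm
    have he := hp.eq_of_sortedLE (List.sortedLE_ofFn_iff.2 hf) (List.sortedLE_ofFn_iff.2 hg)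
    have := List.ofFn_injective he
    simpa using this
  · intro p
    have hcard : p.parts.card ≤ a := by
      have : p.parts.card • 1 ≤ p.parts.sum :=
        Multiset.card_nsmul_le_sum (fun x hx => p.parts_pos hx)
      rw [p.parts_sum] at this
      simp at this
      omega
    set m : Multiset ℕ := p.parts + Multiset.replicate (a - p.parts.card) 0 with hm
    have hmc : (m.sort (· ≤ ·)).length = a := by
      rw [Multiset.length_sort, hm, Multiset.card_add, Multiset.card_replicate]; omega
    let f : Fin a → ℕ := fun i => (m.sort (· ≤ ·)).get (Fin.cast hmc.symm i)
    have hof : List.ofFn f = m.sort (· ≤ ·) := by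
      apply List.ext_get
      · simp [hmc]
      · intro n h1 h2
        simp [f]
    have hmono : Monotone f := by
      rw [← List.sortedLE_ofFn_iff, hof]
      exact (Multiset.pairwise_sort m (· ≤ ·)).sortedLE
    have hco : (↑(List.ofFn f) : Multiset ℕ) = m := by rw [hof, Multiset.sort_eq]
    have hsum : ∑ i, f i = k := by
      rw [← List.sum_ofFn, ← Multiset.sum_coe, hco, hm, Multiset.sum_add, p.parts_sum]
      simp
    refine ⟨⟨f, hmono, hsum⟩, ?_⟩
    ext1
    simp only [Nat.Partition.ofSums_parts]
    rw [hco, hm, Multiset.filter_add, Multiset.filter_eq_self.2, Multiset.filter_eq_nil.2, add_zero]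
    · intro x hx
      simp [Multiset.eq_of_mem_replicate hx]
    · intro x hx
      exact (p.parts_pos hx).ne'

theorem nrm_eq {n a : ℕ} (P : Finset (Fin n)) (h : P.card = a) :
    nrm P = ∑ i : Fin a, ((P.orderEmbOfFin h i : ℕ) - i) := by
  have e1 : nrm P = ∑ x ∈ P, (Finset.univ.filter fun y => y ∉ P ∧ y < x).card := by
    unfold nrm
    rw [Finset.card_filter, Fintype.sum_prod_type, ← Finset.sum_filter_add_sum_filter_not _ (· ∈ P)]
    rw [Finset.sum_eq_zero (s := Finset.univ.filter (· ∉ P)), add_zero]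
    · rw [Finset.filter_univ_mem]
      refine Finset.sum_congr rfl fun x hx => ?_
      rw [Finset.card_filter]
      simp [hx]
    · intro x hx
      simp at hx
      simp [hx]
  rw [e1]
  have e2 : ∀ f : Fin n → ℕ, ∑ x ∈ P, f x = ∑ i, f (P.orderEmbOfFin h i) := by
    intro f
    conv_lhs => rw [← Finset.map_orderEmbOfFin_univ P h]
    rw [Finset.sum_map]
    rfl
  rw [e2]
  refine Finset.sum_congr rfl fun i _ => ?_
  have e3 : (Finset.univ.filter fun y => y ∈ P ∧ y < P.orderEmbOfFin h i).card = i := by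
    have : (Finset.univ.filter fun y => y ∈ P ∧ y < P.orderEmbOfFin h i) =
        (Finset.Iio i).map (P.orderEmbOfFin h).toEmbedding := by
      ext y
      simp only [Finset.mem_filter, Finset.mem_univ, true_and, Finset.mem_map, Finset.mem_Iio]
      constructor
      · rintro ⟨hy, hlt⟩
        have : y ∈ Set.range (P.orderEmbOfFin h) := by
          rw [Finset.range_orderEmbOfFin]; exact hy
        obtain ⟨k, rfl⟩ := this
        exact ⟨k, by simpa using hlt, rfl⟩
      · rintro ⟨k, hk, rfl⟩
        exact ⟨Finset.orderEmbOfFin_mem P h k, by simpa using hk⟩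
    rw [this, Finset.card_map, Fin.card_Iio]
  have e4 : (Finset.univ.filter fun y => y < P.orderEmbOfFin h i).card = P.orderEmbOfFin h i := by
    rw [Finset.filter_gt_eq_Iio, Fin.card_Iio]
  have e5 := Finset.card_filter_add_card_filter_not
    (s := Finset.univ.filter fun y => y < P.orderEmbOfFin h i) (· ∈ P)
  rw [Finset.filter_filter, Finset.filter_filter, e4] at e5
  simp only [and_comm] at e5 e3 ⊢
  omega

theorem card_nrm (n a b k : ℕ) (hn : n = a + b) (ha : k ≤ a) (hb : k ≤ b) :
    Nat.card {P : Finset (Fin n) // P.card = a ∧ nrm P = k} = Nat.card (Nat.Partition k) := by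
  rw [← card_mono_partition a k ha]
  have hge : ∀ (e : Fin a ↪o Fin n) (i : Fin a), (i : ℕ) ≤ e i := by
    rintro e ⟨i, hi⟩
    induction i with
    | zero => simp
    | succ i ih =>
      have h1 := ih (by omega)
      have h2 : e ⟨i, by omega⟩ < e ⟨i + 1, hi⟩ := e.strictMono (by simp [Fin.lt_def])
      rw [Fin.lt_def] at h2
      simp only at h1 ⊢
      omega
  have hmono : ∀ (e : Fin a ↪o Fin n), Monotone (fun i : Fin a => (e i : ℕ) - i) := by
    intro e
    rcases a with _ | a
    · intro i; exact i.elim0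
    rw [Fin.monotone_iff_le_succ]
    intro i
    have h1 : e i.castSucc < e i.succ := e.strictMono (Fin.castSucc_lt_succ)
    rw [Fin.lt_def] at h1
    simp only [Fin.val_castSucc, Fin.val_succ]
    omega
  refine Nat.card_congr (Equiv.ofBijective (fun P =>
    ⟨fun i => (P.1.orderEmbOfFin P.2.1 i : ℕ) - i, hmono _, ?_⟩) ⟨?_, ?_⟩)
  · rw [← nrm_eq]; exact P.2.2
  · rintro ⟨P, hP, hPk⟩ ⟨Q, hQ, hQk⟩ h
    simp only [Subtype.mk.injEq] at h ⊢
    have : P.orderEmbOfFin hP = Q.orderEmbOfFin hQ := by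
      ext i
      have h1 := congrFun h i
      have h2 := hge (P.orderEmbOfFin hP) i
      have h3 := hge (Q.orderEmbOfFin hQ) i
      omega
    rw [← Finset.map_orderEmbOfFin_univ P hP, this, Finset.map_orderEmbOfFin_univ]
  · rintro ⟨f, hf, hfs⟩
    have hle : ∀ i, f i ≤ k := by
      intro i
      rw [← hfs]
      exact Finset.single_le_sum (f := f) (fun _ _ => Nat.zero_le _) (Finset.mem_univ i)
    let e : Fin a → Fin n := fun i => ⟨f i + i, by have := hle i; omega⟩
    have he : StrictMono e := by
      intro i j hij
      have := hf hij.le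
      simp only [e, Fin.lt_def] at hij ⊢
      omega
    let P : Finset (Fin n) := Finset.univ.map ⟨e, he.injective⟩
    have hPc : P.card = a := by simp [P]
    have hemb : e = P.orderEmbOfFin hPc := by
      apply Finset.orderEmbOfFin_unique _ _ he
      intro x
      simp [P]
    have hval : (fun i : Fin a => (P.orderEmbOfFin hPc i : ℕ) - i) = f := by
      rw [← hemb]
      funext i
      simp [e]
    refine ⟨⟨P, hPc, ?_⟩, ?_⟩
    · rw [nrm_eq P hPc, ← hfs]
      exact congrArg (fun g : Fin a → ℕ => ∑ i, g i) hval
    · simp only [Subtype.mk.injEq]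
      exact hval

theorem card_conv {X Y : Type*} [Finite X] [Finite Y] (f : X → ℕ) (g : Y → ℕ) (d : ℕ) :
    Nat.card {p : X × Y // f p.1 + g p.2 = d} =
      ∑ q ∈ Finset.HasAntidiagonal.antidiagonal d, Nat.card {x // f x = q.1} * Nat.card {y // g y = q.2} := by
  classical
  have := Fintype.ofFinite X
  have := Fintype.ofFinite Y
  simp only [Nat.card_eq_fintype_card, Fintype.card_subtype]
  rw [Finset.card_eq_sum_card_fiberwise (f := fun p : X × Y => (f p.1, g p.2))
    (t := Finset.HasAntidiagonal.antidiagonal d) (by intro p hp; simpa using hp)]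
  refine Finset.sum_congr rfl fun q hq => ?_
  rw [← Finset.card_product]
  congr 1
  ext ⟨x, y⟩
  simp only [Finset.HasAntidiagonal.mem_antidiagonal] at hq
  simp only [Finset.mem_filter, Finset.mem_univ, true_and, Finset.mem_product, Prod.ext_iff]
  constructor
  · rintro ⟨_, h⟩; exact h
  · rintro ⟨h1, h2⟩; exact ⟨by omega, h1, h2⟩

theorem twoColored_eq (Δ : ℕ) : twoColored Δ =
    ∑ q ∈ Finset.HasAntidiagonal.antidiagonal Δ, Nat.card (Nat.Partition q.1) * Nat.card (Nat.Partition q.2) := by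
  unfold twoColored
  rw [card_conv (fun x : (Σ k : Fin (Δ + 1), Nat.Partition k) => (x.1 : ℕ))
    (fun x : (Σ k : Fin (Δ + 1), Nat.Partition k) => (x.1 : ℕ)) Δ]
  have key : ∀ k, k ≤ Δ → Nat.card {x : (Σ k : Fin (Δ + 1), Nat.Partition k) // (x.1 : ℕ) = k} =
      Nat.card (Nat.Partition k) := by
    intro k hk
    symm
    refine Nat.card_congr (Equiv.ofBijective
      (fun p => ⟨⟨⟨k, by omega⟩, p⟩, rfl⟩) ⟨?_, ?_⟩)
    · intro p q h
      simpa using h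
    · rintro ⟨⟨⟨j, hj⟩, p⟩, h⟩
      simp only at h
      subst h
      exact ⟨p, rfl⟩
  refine Finset.sum_congr rfl fun q hq => ?_
  rw [Finset.HasAntidiagonal.mem_antidiagonal] at hq
  rw [key _ (by omega), key _ (by omega)]

theorem card_fixed (n a b Δ : ℕ) (hn : n = a + b) (ha : Δ ≤ a) (hb : Δ ≤ b) :
    Nat.card {x : Finset (Fin n) × Finset (Fin n) //
      x.1.card = a ∧ x.2.card = x.1.card ∧ nrm x.1 + nrm x.2 = Δ} = twoColored Δ := by
  rw [twoColored_eq]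
  have h1 : Nat.card {x : Finset (Fin n) × Finset (Fin n) //
      x.1.card = a ∧ x.2.card = x.1.card ∧ nrm x.1 + nrm x.2 = Δ} =
      Nat.card {x : {P : Finset (Fin n) // P.card = a} × {P : Finset (Fin n) // P.card = a} //
        nrm x.1.1 + nrm x.2.1 = Δ} := by
    refine Nat.card_congr ⟨fun x => ⟨(⟨x.1.1, x.2.1⟩, ⟨x.1.2, x.2.2.1.trans x.2.1⟩), x.2.2.2⟩,
      fun x => ⟨(x.1.1.1, x.1.2.1), x.1.1.2, x.1.2.2.trans x.1.1.2.symm, x.2⟩, ?_, ?_⟩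
    · intro x; rfl
    · intro x; rfl
  rw [h1, card_conv (fun x : {P : Finset (Fin n) // P.card = a} => nrm x.1)
    (fun x : {P : Finset (Fin n) // P.card = a} => nrm x.1) Δ]
  have key : ∀ k, k ≤ Δ → Nat.card {x : {P : Finset (Fin n) // P.card = a} // nrm x.1 = k} =
      Nat.card (Nat.Partition k) := by
    intro k hk
    rw [← card_nrm n a b k hn (by omega) (by omega)]
    exact Nat.card_congr (Equiv.subtypeSubtypeEquivSubtypeInter _ (fun P => nrm P = k))
  refine Finset.sum_congr rfl fun q hq => ?_
  rw [Finset.HasAntidiagonal.mem_antidiagonal] at hq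
  rw [key _ (by omega), key _ (by omega)]

theorem stmt_13 (s r Δ : ℕ) (hr : 1 ≤ r) (hrs : r ≤ s) (hΔ : Δ < r) :
    Nat.card {π : Equiv.Perm (Fin (s + r)) //
        lisLen π = 2 ∧ ldsLen π = s ∧
        invCount π = s.choose 2 + r.choose 2 + Δ} =
      (if s = r then 1 else 2) * twoColored Δ := by
  rw [main_bij hrs hΔ]
  have e1 := card_fixed (s + r) s r Δ rfl (by omega) (by omega)
  have e2 := card_fixed (s + r) r s Δ (by omega) (by omega) (by omega)
  split_ifs with h
  · subst h
    simpa using e1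
  · rw [two_mul]
    nth_rewrite 1 [← e1]
    rw [← e2]
    classical
    simp only [Nat.card_eq_fintype_card, Fintype.card_subtype]
    rw [← Finset.card_union_of_disjoint]
    · congr 1
      ext x
      simp only [Finset.mem_union, Finset.mem_filter, Finset.mem_univ, true_and]
      tauto
    · rw [Finset.disjoint_left]
      intro x
      simp only [Finset.mem_filter, Finset.mem_univ, true_and]
      rintro ⟨h1, _⟩ ⟨h2, _⟩
      exact h (h1.symm.trans h2)
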